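/- arXiv:math/0211352 — 4 statements merged into one kernel-verified Lean document; each statement's English description precedes it below -/
import Mathlib

section
/- With H, F_•, F'^• as in the context, the following are equivalent: (1) F_• and F'^• are opposite, i.e. H = ⊕_{k∈ℤ} (F_k ∩ F'^k); (2) for all integers k ≠ ℓ, F_k ∩ F'^ℓ ⊆ (F_{k−1} ∩ F'^ℓ) + (F_k ∩ F'^{ℓ+1}); (3) for every integer k, F_{k−1} ∩ F'^k = 0 and F_k = (F_k ∩ F'^k) + F_{k−1}. -/
/-!
Write `G k = F k ⊓ F' k`. The key condition is the vanishing of `F k ⊓ F' l` for `k < l`.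

* (1) ⇒ (3): for `k < l`, the intersection `F k ⊓ F' l` lies in both `G k` and `G l`, hence
  vanishes. Moreover `H = ⨆ G j = F' (k + 1) ⊔ (G k ⊔ F (k - 1))`; for `x ∈ F k` the component in
  `F' (k + 1)` lies in `F k ⊓ F' (k + 1) = ⊥`, so `F k ≤ G k ⊔ F (k - 1)`.
* (3) ⇒ (2): for `k < l` the left side is zero, and for `l < k` one decomposes `x ∈ F k ⊓ F' l` as
  `g + y` with `g ∈ G k` and `y ∈ F (k - 1)`.
* (2) ⇒ (1): iterating (2) replaces `F k ⊓ F' l` by terms with smaller `k - l`. Below the diagonal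
  `k = l` this ends in zero terms, by finiteness of the filtrations, so `F k ⊓ F' l = ⊥` for
  `k < l`, which makes the `G k` independent. Starting instead from `F k ⊓ F' l = H`, it ends on
  the diagonal, so the `G k` span.
-/

noncomputable section

section Opposite

variable {H : Type*} [AddCommGroup H] [Module ℂ H] {F F' : ℤ → Submodule ℂ H}

/-- A nontrivial relation between the `F k ⊓ F' k` would put its term of largest index `a` in
`F (a - 1) ⊓ F' a`. -/
theorem iSupIndep_inf_of_disjoint (hF : Monotone F)
    (h : ∀ k, F (k - 1) ⊓ F' k = ⊥) : iSupIndep fun k : ℤ => F k ⊓ F' k := by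
  rw [iSupIndep_iff_finsetSum_eq_zero_imp_eq_zero]
  intro s
  induction s using Finset.induction_on_max with
  | empty => simp
  | insert a s ha ih =>
    intro v hv hsum
    have has : a ∉ s := fun h' => lt_irrefl _ (ha a h')
    rw [Finset.sum_insert has] at hsum
    have hva : v a = 0 := by
      have h1 : v a ∈ F (a - 1) ⊓ F' a := by
        refine ⟨?_, (hv a (Finset.mem_insert_self a s)).2⟩
        rw [eq_neg_of_add_eq_zero_left hsum]
        refine neg_mem (sum_mem fun i hi => ?_)
        exact hF (Int.le_sub_one_of_lt (ha i hi)) (hv i (Finset.mem_insert_of_mem hi)).1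
      rwa [h a, Submodule.mem_bot] at h1
    rw [hva, zero_add] at hsum
    intro i hi
    rcases Finset.mem_insert.1 hi with rfl | hi
    · exact hva
    · exact ih v (fun j hj => hv j (Finset.mem_insert_of_mem hj)) hsum i hi

/-- Condition (1) implies condition (3). -/
theorem splitting_of_isInternal (hF : Monotone F) (hF' : Antitone F')
    (h : DirectSum.IsInternal fun k : ℤ => F k ⊓ F' k) (k : ℤ) :
    F (k - 1) ⊓ F' k = ⊥ ∧ F k = (F k ⊓ F' k) ⊔ F (k - 1) := by
  rw [DirectSum.isInternal_submodule_iff_iSupIndep_and_iSup_eq_top] at h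
  obtain ⟨hind, htop⟩ := h
  have hzero : ∀ k l : ℤ, k < l → F k ⊓ F' l = ⊥ := fun k l hkl =>
    le_bot_iff.1 (hind.pairwiseDisjoint hkl.ne
      (inf_le_inf_left _ (hF' hkl.le)) (inf_le_inf_right _ (hF hkl.le)))
  refine ⟨hzero _ _ (by lia), le_antisymm ?_ (sup_le inf_le_left (hF (by lia)))⟩
  have hcover : (⊤ : Submodule ℂ H) ≤ F' (k + 1) ⊔ ((F k ⊓ F' k) ⊔ F (k - 1)) := by
    rw [← htop]
    refine iSup_le fun j => ?_
    rcases lt_trichotomy j k with hj | rfl | hj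
    · exact inf_le_left.trans
        ((hF (by lia)).trans (le_sup_right.trans le_sup_right))
    · exact le_sup_left.trans le_sup_right
    · exact inf_le_right.trans ((hF' (by lia)).trans le_sup_left)
  intro x hx
  obtain ⟨v, hv, u, hu, rfl⟩ := Submodule.mem_sup.1 (hcover (Submodule.mem_top (x := x)))
  have huF : u ∈ F k := sup_le inf_le_left (hF (by lia)) hu
  have hv0 : v ∈ F k ⊓ F' (k + 1) := ⟨by simpa using sub_mem hx huF, hv⟩
  rw [hzero k (k + 1) (by lia), Submodule.mem_bot] at hv0
  rwa [hv0, zero_add]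

/-- Condition (3) implies condition (2). -/
theorem inf_le_of_splitting (hF : Monotone F) (hF' : Antitone F')
    (h : ∀ k : ℤ, F (k - 1) ⊓ F' k = ⊥ ∧ F k = (F k ⊓ F' k) ⊔ F (k - 1))
    (k l : ℤ) (hkl : k ≠ l) :
    F k ⊓ F' l ≤ (F (k - 1) ⊓ F' l) ⊔ (F k ⊓ F' (l + 1)) := by
  rcases hkl.lt_or_gt with hlt | hgt
  · refine le_trans ?_ bot_le
    rw [← (h l).1]
    exact inf_le_inf_right _ (hF (by lia))
  · rintro x ⟨hxF, hxF'⟩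
    rw [SetLike.mem_coe, (h k).2] at hxF
    obtain ⟨g, hg, y, hy, rfl⟩ := Submodule.mem_sup.1 hxF
    have hyF' : y ∈ F' l := by simpa using sub_mem hxF' (hF' hgt.le hg.2)
    rw [add_comm g y]
    exact Submodule.add_mem_sup ⟨hy, hyF'⟩ ⟨hg.1, hF' (by lia) hg.2⟩

/-- Condition (2) implies condition (1). -/
theorem isInternal_of_inf_le (hF : Monotone F)
    (hFbot : ∃ k₀ : ℤ, ∀ k ≤ k₀, F k = ⊥) (hFtop : ∃ k₁ : ℤ, ∀ k ≥ k₁, F k = ⊤)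
    (hF'top : ∃ k₀ : ℤ, ∀ k ≤ k₀, F' k = ⊤) (hF'bot : ∃ k₁ : ℤ, ∀ k ≥ k₁, F' k = ⊥)
    (h : ∀ k l : ℤ, k ≠ l → F k ⊓ F' l ≤ (F (k - 1) ⊓ F' l) ⊔ (F k ⊓ F' (l + 1))) :
    DirectSum.IsInternal fun k : ℤ => F k ⊓ F' k := by
  obtain ⟨b, hb⟩ := hFtop
  obtain ⟨c, hc⟩ := hF'top
  obtain ⟨d, hd⟩ := hF'bot
  obtain ⟨a, ha⟩ := hFbot
  -- If `k - l ≤ a - d`, then `k ≤ a` or `d ≤ l`, so one of `F k`, `F' l` is zero.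
  have hzero : ∀ (n : ℕ) (k l : ℤ), k < l → k - l ≤ a - d + n → F k ⊓ F' l ≤ ⊥ := by
    intro n
    induction n with
    | zero =>
      intro k l _ hn
      by_cases hk : k ≤ a
      · simp [ha k hk]
      · simp [hd l (by lia)]
    | succ n ih =>
      intro k l hkl hn
      exact (h k l hkl.ne).trans
        (sup_le (ih _ _ (by lia) (by lia)) (ih _ _ (by lia) (by lia)))
  have hdisj : ∀ k l : ℤ, k < l → F k ⊓ F' l = ⊥ := fun k l hkl =>
    le_bot_iff.1 (hzero (k - l - (a - d)).toNat k l hkl (by lia))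
  have hspan : ∀ (n : ℕ) (k l : ℤ), k - l ≤ n → F k ⊓ F' l ≤ ⨆ j, F j ⊓ F' j := by
    intro n
    induction n with
    | zero =>
      intro k l hn
      rcases (show k ≤ l by lia).lt_or_eq with hlt | rfl
      · simp [hdisj k l hlt]
      · exact le_iSup (fun j => F j ⊓ F' j) k
    | succ n ih =>
      intro k l hn
      by_cases hkl : k = l
      · subst hkl
        exact le_iSup (fun j => F j ⊓ F' j) k
      · exact (h k l hkl).trans (sup_le (ih _ _ (by lia)) (ih _ _ (by lia)))
  rw [DirectSum.isInternal_submodule_iff_iSupIndep_and_iSup_eq_top]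
  refine ⟨iSupIndep_inf_of_disjoint hF fun k => hdisj _ _ (by lia), top_le_iff.1 ?_⟩
  simpa [hb b le_rfl, hc c le_rfl] using hspan (b - c).toNat b c (by lia)

end Opposite

/-- Let `H` be a finite-dimensional `ℂ`-vector space, `F_•` an increasing
exhaustive filtration and `F'^•` a decreasing exhaustive filtration of `H`.  The following
are equivalent: (1) `F_•` and `F'^•` are opposite, i.e. `H = ⊕_k (F_k ∩ F'^k)`;
(2) for `k ≠ ℓ`, `F_k ∩ F'^ℓ ⊆ (F_{k−1} ∩ F'^ℓ) + (F_k ∩ F'^{ℓ+1})`;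
(3) for every `k`, `F_{k−1} ∩ F'^k = 0` and `F_k = (F_k ∩ F'^k) + F_{k−1}`. -/
theorem statement14 (H : Type*) [AddCommGroup H] [Module ℂ H] [FiniteDimensional ℂ H]
    (F F' : ℤ → Submodule ℂ H)
    (hF : Monotone F) (hFbot : ∃ k₀ : ℤ, ∀ k ≤ k₀, F k = ⊥) (hFtop : ∃ k₁ : ℤ, ∀ k ≥ k₁, F k = ⊤)
    (hF' : Antitone F') (hF'top : ∃ k₀ : ℤ, ∀ k ≤ k₀, F' k = ⊤)
    (hF'bot : ∃ k₁ : ℤ, ∀ k ≥ k₁, F' k = ⊥) :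
    ((DirectSum.IsInternal fun k : ℤ => F k ⊓ F' k) ↔
      (∀ k l : ℤ, k ≠ l → F k ⊓ F' l ≤ (F (k - 1) ⊓ F' l) ⊔ (F k ⊓ F' (l + 1)))) ∧
    ((DirectSum.IsInternal fun k : ℤ => F k ⊓ F' k) ↔
      (∀ k : ℤ, F (k - 1) ⊓ F' k = ⊥ ∧ F k = (F k ⊓ F' k) ⊔ F (k - 1))) := by
  have h13 := splitting_of_isInternal hF hF'
  have h32 := inf_le_of_splitting hF hF'
  have h21 := isInternal_of_inf_le hF hFbot hFtop hF'top hF'bot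
  exact ⟨⟨fun h => h32 (h13 h), h21⟩, ⟨h13, fun h => h21 (h32 h)⟩⟩
end
end

section
/- Let (H_j)_{j∈ℤ} moreover be an increasing filtration of H by subspaces with H_j = 0 for j ≪ 0 and H_j = H for j ≫ 0; set gr_j H = H_j/H_{j−1} and equip it with the induced filtrations F_k gr_j H = (F_k ∩ H_j + H_{j−1})/H_{j−1} and F'^k gr_j H = (F'^k ∩ H_j + H_{j−1})/H_{j−1}. If for every j the filtrations F_• gr_j H and F'^• gr_j H are opposite, then F_• and F'^• are opposite on H, and moreover for every k and j the image of F_k ∩ F'^k ∩ H_j in gr_j H equals F_k gr_j H ∩ F'^k gr_j H. -/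
/-!
Oppositeness of an increasing filtration `F` and a decreasing filtration `F'` is equivalent to the
condition that `F (k - 1)` and `F' k` are complementary for every `k`. Both halves of the latter
pass from the graded pieces to `H`: an element of `F (k - 1) ∩ F' k` lying in `H_j` has zero class
in `gr_j`, so it descends to `H_{j-1}`, and eventually vanishes; and lifting a decomposition in
`gr_j` gives, by induction on `j`, `H_j = F (k - 1) ∩ H_j + F' k ∩ H_j`.

The latter splitting, used for `H_{j-1} = F k ∩ H_{j-1} + F' (k + 1) ∩ H_{j-1}`, also gives the
second claim. If `u ∈ F k ∩ H_j` and `v ∈ F' k ∩ H_j` have the same class in `gr_j`, write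
`u - v = a + b` accordingly; then `u - a = v + b` lies in `F k ∩ F' k ∩ H_j` and lifts that class.
-/

noncomputable section

section OppositeFiltrations

variable {R V : Type*} [Ring R] [AddCommGroup V] [Module R V]

/-- The intersection lies in the summands of index `k - 1` and `k` at once. -/
theorem disjoint_pred_of_iSupIndep {G G' : ℤ → Submodule R V} (hG : Monotone G)
    (hG' : Antitone G') (h : iSupIndep fun k => G k ⊓ G' k) (k : ℤ) :
    Disjoint (G (k - 1)) (G' k) := by
  have h1 : Disjoint (G (k - 1) ⊓ G' (k - 1)) (G k ⊓ G' k) :=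
    h.pairwiseDisjoint (show k - 1 ≠ k by omega)
  rw [disjoint_iff_inf_le] at h1 ⊢
  refine le_trans (le_inf ?_ ?_) h1
  · exact inf_le_inf_left _ (hG' (by omega))
  · exact inf_le_inf_right _ (hG (by omega))

theorem iSup_inf_le_pred_sup {G G' : ℤ → Submodule R V} (hG : Monotone G)
    (hG' : Antitone G') (k : ℤ) : ⨆ l, G l ⊓ G' l ≤ G (k - 1) ⊔ G' k := by
  refine iSup_le fun l => ?_
  rcases lt_or_ge l k with h | h
  · exact inf_le_left.trans ((hG (by omega)).trans le_sup_left)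
  · exact inf_le_right.trans ((hG' h).trans le_sup_right)

/-- The terms of index `≠ k` lie in `F (k - 1) ⊔ F' (k + 1)`, which meets `F k ⊓ F' k`
trivially. -/
theorem iSupIndep_of_disjoint_pred {F F' : ℤ → Submodule R V} (hF : Monotone F)
    (hF' : Antitone F') (h : ∀ k, Disjoint (F (k - 1)) (F' k)) :
    iSupIndep fun k => F k ⊓ F' k := by
  intro k
  have hle : ⨆ l, ⨆ (_ : l ≠ k), F l ⊓ F' l ≤ F (k - 1) ⊔ F' (k + 1) := by
    refine iSup₂_le fun l hl => ?_
    rcases lt_or_gt_of_ne hl with h | h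
    · exact inf_le_left.trans ((hF (by omega)).trans le_sup_left)
    · exact inf_le_right.trans ((hF' (by omega)).trans le_sup_right)
  refine Disjoint.mono_right hle ?_
  rw [Submodule.disjoint_def]
  rintro x ⟨hx, hx'⟩ hs
  obtain ⟨a, ha, b, hb, rfl⟩ := Submodule.mem_sup.1 hs
  have hbF : b ∈ F k := by
    simpa using (F k).sub_mem hx (hF (by omega : k - 1 ≤ k) ha)
  have hb0 : b = 0 := by
    have := h (k + 1)
    rw [add_sub_cancel_right] at this
    exact Submodule.disjoint_def.1 this b hbF hb
  subst hb0
  rw [add_zero] at hx' ⊢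
  exact Submodule.disjoint_def.1 (h k) a ha hx'

theorem iSup_inf_eq_top_of_sup_pred {F F' : ℤ → Submodule R V} (hF : Monotone F)
    (hFbot : ∃ k₀ : ℤ, ∀ k ≤ k₀, F k = ⊥) (hFtop : ∃ k₁ : ℤ, ∀ k ≥ k₁, F k = ⊤)
    (h : ∀ k, F (k - 1) ⊔ F' k = ⊤) : ⨆ k, F k ⊓ F' k = ⊤ := by
  obtain ⟨k₀, h0⟩ := hFbot
  obtain ⟨k₁, h1⟩ := hFtop
  have key : ∀ n : ℕ, F (k₀ + n) ≤ ⨆ k, F k ⊓ F' k := by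
    intro n
    induction n with
    | zero => simp [h0]
    | succ n ih =>
      intro x hx
      have ht : x ∈ F (k₀ + (n + 1 : ℕ) - 1) ⊔ F' (k₀ + (n + 1 : ℕ)) := by simp [h]
      obtain ⟨a, ha, b, hb, rfl⟩ := Submodule.mem_sup.1 ht
      have hbF : b ∈ F (k₀ + (n + 1 : ℕ)) := by
        simpa using Submodule.sub_mem _ hx (hF (by omega) ha)
      refine Submodule.add_mem _ (ih ?_)
        (Submodule.mem_iSup_of_mem (k₀ + (n + 1 : ℕ)) ⟨hbF, hb⟩)
      convert ha using 2
      push_cast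
      ring
  have hk := key (k₁ - k₀).toNat
  rw [h1 _ (by omega)] at hk
  exact top_le_iff.1 hk

/-- If the images of `A` and `B` in every graded piece of a filtration starting at `0` are
disjoint, then `A` and `B` meet trivially in every step of the filtration. -/
theorem disjoint_inf_of_graded {W : ℤ → Submodule R V} (hbot : ∃ j₀ : ℤ, ∀ j ≤ j₀, W j = ⊥)
    {A B : Submodule R V}
    (h : ∀ j, Disjoint ((A ⊓ W j).map (W (j - 1)).mkQ) ((B ⊓ W j).map (W (j - 1)).mkQ))
    (j : ℤ) : A ⊓ B ⊓ W j ≤ ⊥ := by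
  obtain ⟨j₀, h0⟩ := hbot
  rcases le_total j j₀ with hj | hj
  · simp [h0 j hj]
  induction j, hj using Int.leInduction with
  | base => simp [h0]
  | succ j _ ih =>
    rintro x ⟨⟨hA, hB⟩, hW⟩
    have hx := Submodule.disjoint_def.1 (h (j + 1)) _
      (Submodule.mem_map_of_mem ⟨hA, hW⟩) (Submodule.mem_map_of_mem ⟨hB, hW⟩)
    rw [Submodule.mkQ_apply, Submodule.Quotient.mk_eq_zero, add_sub_cancel_right] at hx
    exact ih ⟨⟨hA, hB⟩, hx⟩

/-- If the images of `A` and `B` span every graded piece of a filtration starting at `0`, then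
every step of the filtration splits along `A` and `B`. -/
theorem le_inf_sup_inf_of_graded {W : ℤ → Submodule R V} (hW : Monotone W)
    (hbot : ∃ j₀ : ℤ, ∀ j ≤ j₀, W j = ⊥) {A B : Submodule R V}
    (h : ∀ j, (W j).map (W (j - 1)).mkQ ≤
      (A ⊓ W j).map (W (j - 1)).mkQ ⊔ (B ⊓ W j).map (W (j - 1)).mkQ)
    (j : ℤ) : W j ≤ A ⊓ W j ⊔ B ⊓ W j := by
  obtain ⟨j₀, h0⟩ := hbot
  rcases le_total j j₀ with hj | hj
  · simp [h0 j hj]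
  induction j, hj using Int.leInduction with
  | base => simp [h0]
  | succ j _ ih =>
    have hs := h (j + 1)
    rw [← Submodule.map_sup, Submodule.map_le_iff_le_comap, Submodule.comap_map_mkQ,
      add_sub_cancel_right] at hs
    have hm : W j ≤ W (j + 1) := hW (by omega)
    exact hs.trans (sup_le (ih.trans (sup_le_sup (inf_le_inf_left _ hm) (inf_le_inf_left _ hm)))
      le_rfl)

end OppositeFiltrations

/-- Let `H` be a finite-dimensional `ℂ`-vector space with an increasing
exhaustive filtration `Hfil`, an increasing exhaustive filtration `F_•` and a decreasing
exhaustive filtration `F'^•`.  On `gr_j H = H_j/H_{j−1}` (realized as the image of `H_j` in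
`H/H_{j−1}`) consider the induced filtrations `F_k gr_j H = (F_k ∩ H_j + H_{j−1})/H_{j−1}`
and `F'^k gr_j H = (F'^k ∩ H_j + H_{j−1})/H_{j−1}`.  If for every `j` the induced filtrations
on `gr_j H` are opposite (internal direct sum of intersections, summing to `gr_j H`), then
`F_•` and `F'^•` are opposite on `H`, and for every `k, j` the image of `F_k ∩ F'^k ∩ H_j` in
`gr_j H` equals `F_k gr_j H ∩ F'^k gr_j H`. -/
theorem statement15 (H : Type*) [AddCommGroup H] [Module ℂ H] [FiniteDimensional ℂ H]
    (F F' Hfil : ℤ → Submodule ℂ H)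
    (hF : Monotone F) (hFbot : ∃ k₀ : ℤ, ∀ k ≤ k₀, F k = ⊥) (hFtop : ∃ k₁ : ℤ, ∀ k ≥ k₁, F k = ⊤)
    (hF' : Antitone F') (hF'top : ∃ k₀ : ℤ, ∀ k ≤ k₀, F' k = ⊤)
    (hF'bot : ∃ k₁ : ℤ, ∀ k ≥ k₁, F' k = ⊥)
    (hH : Monotone Hfil) (hHbot : ∃ j₀ : ℤ, ∀ j ≤ j₀, Hfil j = ⊥)
    (hHtop : ∃ j₁ : ℤ, ∀ j ≥ j₁, Hfil j = ⊤)
    (hopp : ∀ j : ℤ,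
      (iSupIndep fun k : ℤ =>
        ((F k ⊓ Hfil j).map (Hfil (j - 1)).mkQ) ⊓ ((F' k ⊓ Hfil j).map (Hfil (j - 1)).mkQ)) ∧
      (⨆ k : ℤ,
        ((F k ⊓ Hfil j).map (Hfil (j - 1)).mkQ) ⊓ ((F' k ⊓ Hfil j).map (Hfil (j - 1)).mkQ))
        = (Hfil j).map (Hfil (j - 1)).mkQ) :
    (DirectSum.IsInternal fun k : ℤ => F k ⊓ F' k) ∧
    (∀ (k j : ℤ),
      (F k ⊓ F' k ⊓ Hfil j).map (Hfil (j - 1)).mkQ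
        = ((F k ⊓ Hfil j).map (Hfil (j - 1)).mkQ) ⊓ ((F' k ⊓ Hfil j).map (Hfil (j - 1)).mkQ)) := by
  have hGr : ∀ j, Monotone fun k => (F k ⊓ Hfil j).map (Hfil (j - 1)).mkQ :=
    fun j a b hab => Submodule.map_mono (inf_le_inf_right _ (hF hab))
  have hGr' : ∀ j, Antitone fun k => (F' k ⊓ Hfil j).map (Hfil (j - 1)).mkQ :=
    fun j a b hab => Submodule.map_mono (inf_le_inf_right _ (hF' hab))
  have hdis : ∀ k j, F (k - 1) ⊓ F' k ⊓ Hfil j ≤ ⊥ := fun k =>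
    disjoint_inf_of_graded hHbot fun j =>
      disjoint_pred_of_iSupIndep (hGr j) (hGr' j) (hopp j).1 k
  have hsplit : ∀ k j, Hfil j ≤ F (k - 1) ⊓ Hfil j ⊔ F' k ⊓ Hfil j := fun k =>
    le_inf_sup_inf_of_graded hH hHbot fun j =>
      (hopp j).2.symm.le.trans (iSup_inf_le_pred_sup (hGr j) (hGr' j) k)
  refine ⟨?_, fun k j => le_antisymm ?_ ?_⟩
  · obtain ⟨j₁, h1⟩ := hHtop
    have htop : Hfil j₁ = ⊤ := h1 j₁ le_rfl
    rw [DirectSum.isInternal_submodule_iff_iSupIndep_and_iSup_eq_top]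
    refine ⟨iSupIndep_of_disjoint_pred hF hF' fun k => ?_,
      iSup_inf_eq_top_of_sup_pred hF hFbot hFtop fun k => ?_⟩
    · simpa [htop, disjoint_iff] using hdis k j₁
    · simpa [htop] using hsplit k j₁
  · exact le_inf (Submodule.map_mono (inf_le_inf_right _ inf_le_left))
      (Submodule.map_mono (inf_le_inf_right _ inf_le_right))
  · rintro _ ⟨⟨u, ⟨huF, huH⟩, rfl⟩, ⟨v, ⟨hvF, hvH⟩, huv⟩⟩
    have hd : u - v ∈ Hfil (j - 1) := by
      rw [← (Submodule.Quotient.eq _)]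
      exact huv.symm
    obtain ⟨a, ⟨haF, haH⟩, b, ⟨hbF, -⟩, hab⟩ := Submodule.mem_sup.1 (hsplit (k + 1) (j - 1) hd)
    rw [add_sub_cancel_right] at haF
    have heq : u - a = v + b := by
      rw [sub_eq_iff_eq_add, add_assoc, add_comm b a, hab, add_sub_cancel]
    refine ⟨u - a, ⟨⟨(F k).sub_mem huF haF, ?_⟩,
      (Hfil j).sub_mem huH (hH (by omega : j - 1 ≤ j) haH)⟩, ?_⟩
    · rw [SetLike.mem_coe, heq]
      exact (F' k).add_mem hvF (hF' (by omega : k ≤ k + 1) hbF)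
    · rw [map_sub, (Submodule.mkQ_apply _ a), (Submodule.Quotient.mk_eq_zero _).2 haH, sub_zero]
end
end

section
/- With G, G₀, (V_α)_{α∈ℚ}, G'⁰ as in the context: G'⁰ is a V-solution to Birkhoff's problem for G₀ (i.e. G₀ ∩ V_α = (G₀ ∩ G'⁰ ∩ V_α) ⊕ (θG₀ ∩ V_α) for every α ∈ ℚ) if and only if for every α ∈ ℚ: G₀ ∩ V_α = ⊕_{k≥0} (G_{−k} ∩ G'^{−k} ∩ V_α) (internal direct sum over k ≥ 0). -/
/-!
Write `P k α = G_{-k} ∩ V_α` and `E k α = G_{-k} ∩ G'^{-k} ∩ V_α`. Multiplication by `θ = τ⁻¹`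
is injective and carries `V_α` to `V_{α+1}`, so it carries `P k α` to `P (k+1) (α+1)` and `E k α`
to `E (k+1) (α+1)` (`map_theta_inf`, `map_theta_inf_inf`).

Being a V-solution says `P 0 α = E 0 α ⊕ P 1 α` for all `α`. Applying `θᵏ` gives
`P k α = E k α ⊕ P (k+1) α`. Directness at each step makes the `E k α` independent
(`iSupIndep_of_disjoint_succ`). Iterating, `P 0 α ≤ (⨆ k, E k α) ⊔ P n α` for every `n`
(`le_iSup_sup`), and the remainder `P n α = θⁿ (P 0 (α - n))` vanishes for large `n` because
`G₀ ∩ V_β = 0` for some `β`.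

Conversely, applying `θ` to the decomposition of `P 0 (α - 1)` identifies `P 1 α` with
`⨆ k, E (k+1) α`, so splitting off the term `k = 0` from the decomposition of `P 0 α` gives
`P 0 α = E 0 α ⊕ P 1 α`.
-/

noncomputable section
open LaurentPolynomial

namespace DS

variable (G : Type*) [AddCommGroup G] [Module (LaurentPolynomial ℂ) G]
  [Module ℂ G] [IsScalarTower ℂ (LaurentPolynomial ℂ) G]

/-- Multiplication by `τᵏ` as a `ℂ`-linear endomorphism of `G`. -/
def mulT (k : ℤ) : G →ₗ[ℂ] G :=
  (LinearMap.lsmul (LaurentPolynomial ℂ) G (T k)).restrictScalars ℂ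

/-- `G_k = τᵏ·G₀` (for `k = −1` this is `θG₀`). -/
def Gk (G₀ : Submodule ℂ G) (k : ℤ) : Submodule ℂ G := G₀.map (mulT G k)

/-- `V_{<α} = ⋃_{β<α} V_β`. -/
def Vlt (V : ℚ → Submodule ℂ G) (α : ℚ) : Submodule ℂ G :=
  ⨆ β : {β : ℚ // β < α}, V (β : ℚ)

/-- `W ⊆ G` is finitely generated as a `ℂ[τ]`-module. -/
def FGtau (W : Submodule ℂ G) : Prop :=
  ∃ s : Finset G, (s : Set G) ⊆ W ∧
    W = Submodule.span ℂ
      (⋃ k : ℕ, (fun x => ((T 1 : LaurentPolynomial ℂ) ^ k) • x) '' (s : Set G))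

/-- `G'⁰` is a *V-solution* to Birkhoff's problem for `G₀`:
`G₀ ∩ V_α = (G₀ ∩ G'⁰ ∩ V_α) ⊕ (θG₀ ∩ V_α)` for every `α ∈ ℚ`. -/
def VSol (G₀ G' : Submodule ℂ G) (V : ℚ → Submodule ℂ G) : Prop :=
  ∀ α : ℚ,
    G₀ ⊓ V α = (G₀ ⊓ G' ⊓ V α) ⊔ (Gk G G₀ (-1) ⊓ V α) ∧
    (G₀ ⊓ G' ⊓ V α) ⊓ (Gk G G₀ (-1) ⊓ V α) = ⊥

/-- The filtrations induced by `G_• = τ^•·G₀` and `G'^• = τ^•·G'⁰` on the graded piece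
`gr_α^V = V_α/V_{<α}` (realized inside `G/V_{<α}`) are opposite: `gr_α^V` is the internal
direct sum of the subspaces `G_k gr_α^V ∩ G'ᵏ gr_α^V`. -/
def OppositeAt (G₀ G' : Submodule ℂ G) (V : ℚ → Submodule ℂ G) (α : ℚ) : Prop :=
  iSupIndep (fun k : ℤ =>
    ((Gk G G₀ k ⊓ V α).map (Vlt G V α).mkQ) ⊓ ((Gk G G' k ⊓ V α).map (Vlt G V α).mkQ)) ∧
  (⨆ k : ℤ,
    ((Gk G G₀ k ⊓ V α).map (Vlt G V α).mkQ) ⊓ ((Gk G G' k ⊓ V α).map (Vlt G V α).mkQ))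
    = (V α).map (Vlt G V α).mkQ

end DS

namespace DS

section Lattice

variable {M : Type*} [AddCommGroup M] [Module ℂ M]

/-- If `P` is a decreasing sequence of subspaces and each `E k ≤ P k` meets `P (k+1)` trivially,
then the `E k` are independent: in a vanishing sum the term of lowest index lies in the next
`P`, hence is zero. -/
lemma iSupIndep_of_disjoint_succ {E P : ℕ → Submodule ℂ M} (hP : Antitone P)
    (hE : ∀ k, E k ≤ P k) (hd : ∀ k, Disjoint (E k) (P (k + 1))) : iSupIndep E := by
  classical
  rw [iSupIndep_iff_finsetSum_eq_zero_imp_eq_zero]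
  intro s v hv h0 k
  induction k using Nat.strong_induction_on with
  | _ k ih =>
    intro hk
    refine Submodule.disjoint_def.1 (hd k) _ (hv k hk) ?_
    rw [← Finset.add_sum_erase s v hk] at h0
    rw [eq_neg_of_add_eq_zero_left h0]
    refine Submodule.neg_mem _ (Submodule.sum_mem _ fun j hj => ?_)
    obtain ⟨hjk, hjs⟩ := Finset.mem_erase.1 hj
    rcases lt_or_gt_of_ne hjk with h | h
    · rw [ih j h hjs]
      exact Submodule.zero_mem _
    · exact hP h (hE j (hv j hjs))

lemma le_iSup_sup {E P : ℕ → Submodule ℂ M} (h : ∀ k, P k ≤ E k ⊔ P (k + 1)) (n : ℕ) :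
    P 0 ≤ (⨆ k, E k) ⊔ P n := by
  induction n with
  | zero => exact le_sup_right
  | succ n ih =>
    exact ih.trans (sup_le le_sup_left
      ((h n).trans (sup_le_sup_right (le_iSup E n) _)))

end Lattice

section Shift

variable {G : Type*} [AddCommGroup G] [Module (LaurentPolynomial ℂ) G]
  [Module ℂ G] [IsScalarTower ℂ (LaurentPolynomial ℂ) G]

lemma mulT_mulT (a b : ℤ) (x : G) : mulT G a (mulT G b x) = mulT G (a + b) x := by
  change (T a : LaurentPolynomial ℂ) • (T b : LaurentPolynomial ℂ) • x =
    (T (a + b) : LaurentPolynomial ℂ) • x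
  rw [smul_smul, ← T_add]

lemma mulT_zero (x : G) : mulT G 0 x = x := by
  simp [mulT]

lemma mulT_injective (a : ℤ) : Function.Injective (mulT G a) :=
  Function.LeftInverse.injective (g := mulT G (-a)) fun x => by
    rw [mulT_mulT, neg_add_cancel, mulT_zero]

lemma map_mulT_map (a b : ℤ) (S : Submodule ℂ G) :
    (S.map (mulT G b)).map (mulT G a) = S.map (mulT G (a + b)) := by
  rw [← Submodule.map_comp]
  congr 1
  ext x
  exact mulT_mulT a b x

lemma Gk_zero (S : Submodule ℂ G) : Gk G S 0 = S := by
  have h : mulT G 0 = LinearMap.id := LinearMap.ext mulT_zero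
  rw [Gk, h, Submodule.map_id]

lemma map_theta_Gk (S : Submodule ℂ G) (k : ℕ) :
    (Gk G S (-(k : ℤ))).map (mulT G (-1)) = Gk G S (-((k + 1 : ℕ) : ℤ)) := by
  rw [Gk, map_mulT_map, Gk]
  congr 2
  push_cast
  ring

variable {V : ℚ → Submodule ℂ G}

lemma map_theta_V (hV : ∀ α : ℚ, (V α).map (mulT G 1) = V (α - 1)) (α : ℚ) :
    (V α).map (mulT G (-1)) = V (α + 1) := by
  have h := hV (α + 1)
  rw [add_sub_cancel_right] at h
  rw [← h, map_mulT_map]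
  exact Gk_zero (V (α + 1))

lemma map_theta_inf (hV : ∀ α : ℚ, (V α).map (mulT G 1) = V (α - 1)) (S : Submodule ℂ G)
    (k : ℕ) (α : ℚ) :
    (Gk G S (-(k : ℤ)) ⊓ V α).map (mulT G (-1)) =
      Gk G S (-((k + 1 : ℕ) : ℤ)) ⊓ V (α + 1) := by
  rw [Submodule.map_inf _ (mulT_injective _), map_theta_Gk, map_theta_V hV]

lemma map_theta_inf_inf (hV : ∀ α : ℚ, (V α).map (mulT G 1) = V (α - 1))
    (S S' : Submodule ℂ G) (k : ℕ) (α : ℚ) :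
    (Gk G S (-(k : ℤ)) ⊓ Gk G S' (-(k : ℤ)) ⊓ V α).map (mulT G (-1)) =
      Gk G S (-((k + 1 : ℕ) : ℤ)) ⊓ Gk G S' (-((k + 1 : ℕ) : ℤ)) ⊓ V (α + 1) := by
  rw [Submodule.map_inf _ (mulT_injective _), Submodule.map_inf _ (mulT_injective _),
    map_theta_Gk, map_theta_Gk, map_theta_V hV]

/-- The relation `P 0 α = E 0 α ⊕ P 1 α` for all `α` propagates to every `k` by applying `θ`. -/
lemma VSol.step {G₀ G' : Submodule ℂ G} (h : VSol G G₀ G' V)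
    (hV : ∀ α : ℚ, (V α).map (mulT G 1) = V (α - 1)) (k : ℕ) : ∀ α : ℚ,
    Gk G G₀ (-(k : ℤ)) ⊓ V α = (Gk G G₀ (-(k : ℤ)) ⊓ Gk G G' (-(k : ℤ)) ⊓ V α) ⊔
      (Gk G G₀ (-((k + 1 : ℕ) : ℤ)) ⊓ V α) ∧
    Disjoint (Gk G G₀ (-(k : ℤ)) ⊓ Gk G G' (-(k : ℤ)) ⊓ V α)
      (Gk G G₀ (-((k + 1 : ℕ) : ℤ)) ⊓ V α) := by
  induction k with
  | zero =>
    intro α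
    simpa [Gk_zero, disjoint_iff] using h α
  | succ k ih =>
    intro α
    obtain ⟨β, rfl⟩ : ∃ β, α = β + 1 := ⟨α - 1, by ring⟩
    rw [← map_theta_inf hV, ← map_theta_inf_inf hV, ← map_theta_inf hV]
    refine ⟨?_, Submodule.disjoint_map (mulT_injective _) (ih β).2⟩
    rw [← Submodule.map_sup, ← (ih β).1]

lemma Gk_inf_eq_bot {S : Submodule ℂ G}
    (hV : ∀ α : ℚ, (V α).map (mulT G 1) = V (α - 1)) (n : ℕ) :
    ∀ α : ℚ, S ⊓ V (α - n) = ⊥ → Gk G S (-(n : ℤ)) ⊓ V α = ⊥ := by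
  induction n with
  | zero =>
    intro α h
    simpa [Gk_zero] using h
  | succ n ih =>
    intro α h
    obtain ⟨β, rfl⟩ : ∃ β, α = β + 1 := ⟨α - 1, by ring⟩
    rw [← map_theta_inf hV, ih β, Submodule.map_bot]
    rw [← h]
    congr 2
    push_cast
    ring

end Shift

end DS

open DS in
/-- `G'⁰` is a V-solution to Birkhoff's problem for `G₀` if and only if for
every `α ∈ ℚ` one has `G₀ ∩ V_α = ⊕_{k ≥ 0} (G_{−k} ∩ G'^{−k} ∩ V_α)` (internal direct sum
over `k ≥ 0`). -/
theorem statement17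
    (G : Type*) [AddCommGroup G] [Module (LaurentPolynomial ℂ) G]
    [Module ℂ G] [IsScalarTower ℂ (LaurentPolynomial ℂ) G]
    (G₀ : Submodule ℂ G)
    (hG₀inv : ∀ x ∈ G₀, (LaurentPolynomial.T (-1) : LaurentPolynomial ℂ) • x ∈ G₀)
    (hG₀span : Submodule.span (LaurentPolynomial ℂ) (G₀ : Set G) = ⊤)
    (V : ℚ → Submodule ℂ G)
    (hVmono : Monotone V)
    (hVFG : ∀ α : ℚ, FGtau G (V α))
    (hVtau : ∀ α : ℚ, (V α).map (mulT G 1) = V (α - 1))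
    (hVunion : (⨆ α : ℚ, V α) = ⊤)
    (hjumps : ∃ A : Finset ℚ, (∀ a ∈ A, 0 ≤ a ∧ a < 1) ∧
      ∀ α : ℚ, (∃ α' : ℚ, α' < α ∧ Vlt G V α = V α') ∧
        (V α ≠ Vlt G V α → ∃ a ∈ A, ∃ k : ℤ, α = (a : ℚ) + k))
    (hdim : ∀ α : ℚ, FiniteDimensional ℂ ↥(G₀ ⊓ V α))
    (hGkbot : ∀ k : ℤ, ∃ β : ℚ, Gk G G₀ k ⊓ V β = ⊥)
    (G' : Submodule ℂ G)
    (hG'FG : FGtau G G')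
    (hG'span : Submodule.span (LaurentPolynomial ℂ) (G' : Set G) = ⊤)
    (hG'V : ∃ β₀ : ℚ, ∀ β ≤ β₀, V β ≤ G')
    :
    VSol G G₀ G' V ↔
      ∀ α : ℚ,
        (iSupIndep fun k : ℕ => Gk G G₀ (-(k : ℤ)) ⊓ Gk G G' (-(k : ℤ)) ⊓ V α) ∧
        (⨆ k : ℕ, Gk G G₀ (-(k : ℤ)) ⊓ Gk G G' (-(k : ℤ)) ⊓ V α) = G₀ ⊓ V α := by
  constructor
  · intro h α
    have hstep := fun k => h.step hVtau k α
    have hanti : Antitone fun k : ℕ => Gk G G₀ (-(k : ℤ)) ⊓ V α :=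
      antitone_nat_of_succ_le fun k => le_sup_right.trans_eq (hstep k).1.symm
    have hEP : ∀ k : ℕ, Gk G G₀ (-(k : ℤ)) ⊓ Gk G G' (-(k : ℤ)) ⊓ V α ≤
        Gk G G₀ (-(k : ℤ)) ⊓ V α := fun k => inf_le_inf_right _ inf_le_left
    have h0 : Gk G G₀ (-((0 : ℕ) : ℤ)) ⊓ V α = G₀ ⊓ V α := by simp [Gk_zero]
    refine ⟨iSupIndep_of_disjoint_succ hanti hEP fun k => (hstep k).2,
      le_antisymm (iSup_le fun k => ?_) ?_⟩
    · exact ((hEP k).trans (hanti (Nat.zero_le k))).trans_eq h0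
    · obtain ⟨β, hβ⟩ := hGkbot 0
      rw [Gk_zero] at hβ
      obtain ⟨n, hn⟩ := exists_nat_ge (α - β)
      have hbot : Gk G G₀ (-(n : ℤ)) ⊓ V α = ⊥ := Gk_inf_eq_bot hVtau n α <|
        eq_bot_iff.2 (hβ ▸ inf_le_inf_left _ (hVmono (by linarith)))
      have := le_iSup_sup (P := fun k : ℕ => Gk G G₀ (-(k : ℤ)) ⊓ V α)
        (fun k => (hstep k).1.le) n
      simp only [hbot, sup_bot_eq] at this
      exact h0.symm.le.trans this
  · intro h α
    -- `θG₀ ∩ V_α` is the sum of all terms except the one with `k = 0`.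
    have h1 : Gk G G₀ (-1) ⊓ V α = ⨆ k : ℕ,
        Gk G G₀ (-((k + 1 : ℕ) : ℤ)) ⊓ Gk G G' (-((k + 1 : ℕ) : ℤ)) ⊓ V α := by
      obtain ⟨β, rfl⟩ : ∃ β, α = β + 1 := ⟨α - 1, by ring⟩
      simp only [← map_theta_inf_inf hVtau]
      rw [← Submodule.map_iSup, (h β).2, Submodule.map_inf _ (mulT_injective _),
        map_theta_V hVtau, Gk]
    have h0 : G₀ ⊓ G' ⊓ V α =
        Gk G G₀ (-((0 : ℕ) : ℤ)) ⊓ Gk G G' (-((0 : ℕ) : ℤ)) ⊓ V α := by simp [Gk_zero]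
    rw [h1, h0]
    refine ⟨?_, disjoint_iff.1 (((h α).1 0).mono_right (iSup_le fun k => ?_))⟩
    · rw [← (h α).2]
      exact (sup_iSup_nat_succ
        fun k : ℕ => Gk G G₀ (-(k : ℤ)) ⊓ Gk G G' (-(k : ℤ)) ⊓ V α).symm
    · exact le_iSup₂_of_le (k + 1) (Nat.succ_ne_zero k) le_rfl
end
end

section
/- With G, G₀, (V_α)_{α∈ℚ}, G'⁰ as in the context, assume G₀ ≠ 0 and let α_min = min{α ∈ ℚ : G₀ ∩ V_α ≠ 0} (this minimum exists by the hypotheses). If G'⁰ is a V-solution to Birkhoff's problem for G₀, then for every α ∈ ℚ with α < α_min + 1: θG₀ ∩ V_α = 0 and G₀ ∩ G'⁰ ∩ V_α = G₀ ∩ V_α; in particular G₀ ∩ G'⁰ ∩ V_α does not depend on the choice of the V-solution G'⁰, and the natural map G₀ ∩ V_α → G₀/θG₀ is injective. -/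
noncomputable section
open LaurentPolynomial

open DS in
/-- Assume `G₀ ≠ 0` and let `α_min` be the minimum of
`{α ∈ ℚ : G₀ ∩ V_α ≠ 0}` (which exists by the hypotheses).  If `G'⁰` is a V-solution to
Birkhoff's problem for `G₀`, then for every `α < α_min + 1` one has `θG₀ ∩ V_α = 0` and
`G₀ ∩ G'⁰ ∩ V_α = G₀ ∩ V_α`; in particular `G₀ ∩ G'⁰ ∩ V_α` does not depend on the choice of
the V-solution, and the natural map `G₀ ∩ V_α → G₀/θG₀` is injective. -/
theorem statement19
    (G : Type*) [AddCommGroup G] [Module (LaurentPolynomial ℂ) G]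
    [Module ℂ G] [IsScalarTower ℂ (LaurentPolynomial ℂ) G]
    (G₀ : Submodule ℂ G)
    (hG₀inv : ∀ x ∈ G₀, (LaurentPolynomial.T (-1) : LaurentPolynomial ℂ) • x ∈ G₀)
    (hG₀span : Submodule.span (LaurentPolynomial ℂ) (G₀ : Set G) = ⊤)
    (V : ℚ → Submodule ℂ G)
    (hVmono : Monotone V)
    (hVFG : ∀ α : ℚ, FGtau G (V α))
    (hVtau : ∀ α : ℚ, (V α).map (mulT G 1) = V (α - 1))
    (hVunion : (⨆ α : ℚ, V α) = ⊤)
    (hjumps : ∃ A : Finset ℚ, (∀ a ∈ A, 0 ≤ a ∧ a < 1) ∧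
      ∀ α : ℚ, (∃ α' : ℚ, α' < α ∧ Vlt G V α = V α') ∧
        (V α ≠ Vlt G V α → ∃ a ∈ A, ∃ k : ℤ, α = (a : ℚ) + k))
    (hdim : ∀ α : ℚ, FiniteDimensional ℂ ↥(G₀ ⊓ V α))
    (hGkbot : ∀ k : ℤ, ∃ β : ℚ, Gk G G₀ k ⊓ V β = ⊥)
    (G' : Submodule ℂ G)
    (hG'FG : FGtau G G')
    (hG'span : Submodule.span (LaurentPolynomial ℂ) (G' : Set G) = ⊤)
    (hG'V : ∃ β₀ : ℚ, ∀ β ≤ β₀, V β ≤ G')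
    (hG₀ne : G₀ ≠ ⊥)
    (αmin : ℚ) (hmin : IsLeast {α : ℚ | G₀ ⊓ V α ≠ ⊥} αmin)
    (hsol : VSol G G₀ G' V) :
    ∀ α : ℚ, α < αmin + 1 →
      Gk G G₀ (-1) ⊓ V α = ⊥ ∧ G₀ ⊓ G' ⊓ V α = G₀ ⊓ V α := by
  intro α hα
  have hzero : Gk G G₀ (-1) ⊓ V α = ⊥ := by
    rw [eq_bot_iff]
    rintro x ⟨⟨y, hy, rfl⟩, hx⟩
    -- Multiplication by `τ` carries `θy ∈ V_α` to `y ∈ V_{α-1}`, and `α - 1 < αmin`.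
    have hyV : y ∈ V (α - 1) := by
      rw [← hVtau α]
      refine ⟨_, hx, ?_⟩
      change (T 1 : LaurentPolynomial ℂ) • (T (-1) : LaurentPolynomial ℂ) • y = y
      rw [smul_smul, ← T_add, add_neg_cancel, T_zero, one_smul]
    have hbot : G₀ ⊓ V (α - 1) = ⊥ := by
      by_contra h
      have hle : αmin ≤ α - 1 := hmin.2 h
      linarith
    have hy0 : y = 0 := (Submodule.mem_bot ℂ).1 (hbot ▸ ⟨hy, hyV⟩)
    simp [hy0]
  refine ⟨hzero, ?_⟩
  have h := (hsol α).1
  rw [hzero, sup_bot_eq] at h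
  exact h.symm
end
end
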